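/- Let D ≥ 1 and fix LayerNorm parameters γ β : Fin D → ℝ, with LN(x)_i = γ_i · N(x)_i + β_i where N(x)_i = (x_i − μ(x))/sqrt(Var(x)). Fix a positional embedding matrix E : Fin n → Fin D → ℝ and define the Swin-style early-stage output row-wise: z_swin(X)_k = LN(LN(X_k) + E_k) for X : Fin n → Fin D → ℝ. Assume that for each row k, Var(X_k) > 0 and Var(LN(X_k) + E_k) > 0. Then for every real a > 0 and every real b, z_swin(a•X + b•𝟙) = z_swin(X), where a•X + b•𝟙 denotes the matrix with entries a·X_{k,i} + b. -/

import Mathlib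

open Finset

/-- Empirical mean of a vector. -/
noncomputable def emean {D : ℕ} (x : Fin D → ℝ) : ℝ := (1 / (D : ℝ)) * ∑ i, x i

/-- Empirical variance of a vector. -/
noncomputable def evar {D : ℕ} (x : Fin D → ℝ) : ℝ :=
  (1 / (D : ℝ)) * ∑ i, (x i - emean x) ^ 2

/-- LayerNorm normalization step. -/
noncomputable def nrm {D : ℕ} (x : Fin D → ℝ) : Fin D → ℝ :=
  fun i => (x i - emean x) / Real.sqrt (evar x)

/-- LayerNorm with per-channel parameters γ, β. -/
noncomputable def layerNorm {D : ℕ} (γ β : Fin D → ℝ) (x : Fin D → ℝ) : Fin D → ℝ :=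
  fun i => γ i * nrm x i + β i

/-- Swin-style early-stage output: PreLayerNorm, add positional embedding, PostLayerNorm,
applied row-wise. -/
noncomputable def zSwin {n D : ℕ} (γ β : Fin D → ℝ) (E : Fin n → Fin D → ℝ)
    (X : Fin n → Fin D → ℝ) : Fin n → Fin D → ℝ :=
  fun k => layerNorm γ β (layerNorm γ β (X k) + E k)

/-! `nrm` is invariant under translations, and scaling its argument by `a` multiplies it by
`a / |a|`, which is `1` for `a > 0`. So the PreLayerNorm already removes the affine change in every
row, before the positional embedding is added. -/

section Affine

variable {D : ℕ} (x : Fin D → ℝ)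

theorem emean_smul (a : ℝ) : emean (a • x) = a * emean x := by
  simp only [emean, Pi.smul_apply, smul_eq_mul, ← mul_sum, mul_left_comm]

theorem emean_add_const [NeZero D] (b : ℝ) : emean (fun i => x i + b) = emean x + b := by
  have hD : (D : ℝ) ≠ 0 := NeZero.ne _
  simp only [emean, sum_add_distrib, sum_const, card_univ, Fintype.card_fin, nsmul_eq_mul]
  field_simp

theorem smul_sub_emean_smul (a : ℝ) (i : Fin D) :
    (a • x) i - emean (a • x) = a * (x i - emean x) := by
  rw [emean_smul, Pi.smul_apply, smul_eq_mul, mul_sub]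

theorem add_const_sub_emean_add_const (b : ℝ) (i : Fin D) :
    x i + b - emean (fun j => x j + b) = x i - emean x := by
  have : NeZero D := ⟨i.pos.ne'⟩
  rw [emean_add_const, add_sub_add_right_eq_sub]

theorem evar_smul (a : ℝ) : evar (a • x) = a ^ 2 * evar x := by
  simp only [evar, smul_sub_emean_smul, mul_pow, ← mul_sum, mul_left_comm]

theorem evar_add_const (b : ℝ) : evar (fun i => x i + b) = evar x := by
  simp only [evar, add_const_sub_emean_add_const]

-- For `a = 0` both sides vanish, because `0 / 0 = 0`.
theorem nrm_smul (a : ℝ) : nrm (a • x) = (a / |a|) • nrm x := by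
  funext i
  calc nrm (a • x) i
      = a * (x i - emean x) / (|a| * √(evar x)) := by
        rw [nrm, smul_sub_emean_smul, evar_smul, Real.sqrt_mul (sq_nonneg a), Real.sqrt_sq_eq_abs]
    _ = a / |a| * nrm x i := mul_div_mul_comm _ _ _ _

theorem nrm_add_const (b : ℝ) : nrm (fun i => x i + b) = nrm x := by
  funext i
  simp only [nrm, add_const_sub_emean_add_const, evar_add_const]

theorem nrm_smul_of_pos {a : ℝ} (ha : 0 < a) : nrm (a • x) = nrm x := by
  rw [nrm_smul, abs_of_pos ha, div_self ha.ne', one_smul]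

theorem layerNorm_affine_of_pos (γ β : Fin D → ℝ) {a : ℝ} (ha : 0 < a) (b : ℝ) :
    layerNorm γ β (fun i => a * x i + b) = layerNorm γ β x := by
  have h_nrm : nrm (fun i => a * x i + b) = nrm x :=
    (nrm_add_const (a • x) b).trans (nrm_smul_of_pos x ha)
  funext i
  simp only [layerNorm, h_nrm]

end Affine

theorem stmt_2 {n D : ℕ} (hD : 1 ≤ D) (γ β : Fin D → ℝ)
    (E : Fin n → Fin D → ℝ) (X : Fin n → Fin D → ℝ)
    (hX : ∀ k, 0 < evar (X k))
    (hXE : ∀ k, 0 < evar (layerNorm γ β (X k) + E k))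
    (a b : ℝ) (ha : 0 < a) :
    zSwin γ β E (fun k i => a * X k i + b) = zSwin γ β E X := by
  funext k
  simp only [zSwin, layerNorm_affine_of_pos (X k) γ β ha b]
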